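/- Let Q be a prime power, let s be an odd positive integer, and let q = Q^{2s}. Then for all integers t, m with 1 ≤ t < m ≤ ⌊(q + Q(Q−1)Q^{s})/(Q+1)⌋, there exists an optimal (2, Q)-LRC over F_q with parameters [m(Q+1), 2t+1, (m−t)(Q+1)]_q. Moreover, if Q = 2, the same conclusion holds for every positive integer s (not necessarily odd). -/

import Mathlib

/-- The Hamming weight of a vector: the number of nonzero coordinates. -/
def hammingWt {F : Type*} [Zero F] [DecidableEq F] {n : ℕ} (v : Fin n → F) : ℕ :=
  (Finset.univ.filter (fun i => v i ≠ 0)).card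

/-- The minimum distance of the linear code `C` is at least `d`. -/
def MinDistGe {F : Type*} [Field F] [DecidableEq F] {n : ℕ}
    (C : Submodule F (Fin n → F)) (d : ℕ) : Prop :=
  ∀ c ∈ C, c ≠ 0 → d ≤ hammingWt c

/-- The minimum distance of the linear code `C` is exactly `d`. -/
def MinDistEq {F : Type*} [Field F] [DecidableEq F] {n : ℕ}
    (C : Submodule F (Fin n → F)) (d : ℕ) : Prop :=
  MinDistGe C d ∧ ∃ c ∈ C, c ≠ 0 ∧ hammingWt c = d

/-- `C` is an `(r, δ)`-locally repairable code: every coordinate `i` has a repair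
group `R` containing `i`, of size at most `r + δ - 1`, such that the punctured code
`C|_R` has minimum distance at least `δ` (i.e. every codeword whose restriction to
`R` is nonzero has at least `δ` nonzero coordinates inside `R`). -/
def IsLRC {F : Type*} [Field F] [DecidableEq F] {n : ℕ}
    (C : Submodule F (Fin n → F)) (r δ : ℕ) : Prop :=
  ∀ i : Fin n, ∃ R : Finset (Fin n), i ∈ R ∧ R.card ≤ r + δ - 1 ∧
    ∀ c ∈ C, (∃ j ∈ R, c j ≠ 0) → δ ≤ (R.filter (fun j => c j ≠ 0)).card

/-- The parameters `[n, k, d]` attain the Singleton-type bound for `(r, δ)`-LRCs: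
`d = n - k + 1 - (⌈k/r⌉ - 1)(δ - 1)`  (here `⌈k/r⌉ = (k + r - 1)/r`). -/
def SingletonOptimal (n k d r δ : ℕ) : Prop :=
  (d : ℤ) = (n : ℤ) - (k : ℤ) + 1 - ((((k + r - 1) / r : ℕ) : ℤ) - 1) * ((δ : ℤ) - 1)

/-- There exists an optimal `(r, δ)`-LRC over `F` with parameters `[n, k, d]`. -/
def ExistsOptimalLRC (F : Type*) [Field F] [DecidableEq F] (n k d r δ : ℕ) : Prop :=
  ∃ C : Submodule F (Fin n → F),
    Module.finrank F C = k ∧ MinDistEq C d ∧ IsLRC C r δ ∧ SingletonOptimal n k d r δ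

/-!
The code consists of the evaluations of the functions `p₀(Y) + X p₁(Y)`, with `deg p₀ ≤ t` and
`deg p₁ < t`, at points of the curve `X ^ (Q + 1) = Y ^ Q + Y - b` that fill `m` complete fibers of
the `Y`-coordinate, each consisting of `Q + 1` points. On a fiber such a function is affine in `X`,
so it vanishes there at most once unless it vanishes identically: this is the locality. The norm
`p₀ ^ (Q + 1) - (Y ^ Q + Y - b) (-p₁) ^ (Q + 1)` down to `F[Y]` has degree at most `t (Q + 1)` and
counts the zeros of a codeword, so at most `t (Q + 1)` of its coordinates vanish.

The remaining point is that some curve in the family has `q + Q (Q - 1) Q ^ s` points. With `K` the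
subfield of order `Q` and `γ ^ Q = -γ`, an element `z` is of the form `y ^ Q + y` exactly
when `Tr (γ z) = 0`, so the count reduces to the value distribution of
`x ↦ Tr (γ x ^ (Q + 1))`. Scaling by elements of prescribed norm shows that this form takes all
nonzero values equally often. The first two moments of the distribution then determine it up to a
sign, which divisibility of the fibers by `Q + 1` fixes. The sign is favorable to `b = 0` when `s`
is odd; when `Q = 2` the only other value can be used instead.
-/

open scoped Finset Polynomial

section Counting

theorem sum_card_filter_sq {α β : Type*} [Fintype α] [Fintype β] [DecidableEq β] (f : α → β) :
    ∑ c, #{x | f x = c} ^ 2 = #{p : α × α | f p.1 = f p.2} := by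
  rw [Finset.card_eq_sum_card_fiberwise (f := fun p => f p.1) (t := Finset.univ) (by simp)]
  refine Finset.sum_congr rfl fun c _ => ?_
  rw [sq, ← Finset.card_product]
  congr 1
  ext p
  simp only [Finset.mem_product, Finset.mem_filter, Finset.mem_univ, true_and]
  exact ⟨fun h => ⟨h.1.trans h.2.symm, h.1⟩, fun h => ⟨h.2, h.1.symm.trans h.2⟩⟩

theorem card_filter_prod {α β : Type*} [Fintype α] [Fintype β] (p : α × β → Prop)
    [DecidablePred p] : #{z : α × β | p z} = ∑ x, #{y : β | p (x, y)} := by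
  simp_rw [Finset.card_filter, Fintype.sum_prod_type]

theorem card_filter_fin_mul {m n : ℕ} (p : Fin m → Fin n → Prop) [∀ i, DecidablePred (p i)] :
    #{k : Fin (m * n) | p k.divNat k.modNat} = ∑ i, #{j | p i j} := by
  rw [← card_filter_prod fun z : Fin m × Fin n => p z.1 z.2]
  exact Finset.card_equiv finProdFinEquiv.symm fun k => by simp

theorem card_filter_divNat_eq_and {m n : ℕ} (i : Fin m) (p : Fin n → Prop) [DecidablePred p] :
    #{k : Fin (m * n) | k.divNat = i ∧ p k.modNat} = #{j | p j} := by
  rw [card_filter_fin_mul fun i' j => i' = i ∧ p j, Finset.sum_eq_single i] <;> simp +contextual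

end Counting

section FiniteField

theorem card_filter_linearMap_eq {K V W : Type*} [Field K] [AddCommGroup V] [Module K V]
    [AddCommGroup W] [Module K W] [Fintype V] [DecidableEq W] (f : V →ₗ[K] W) {c : W}
    (hc : c ∈ LinearMap.range f) : #{x | f x = c} = Nat.card (LinearMap.ker f) := by
  rw [AddMonoidHom.card_fiber_eq_of_mem_range f hc ⟨0, map_zero f⟩, ← Fintype.card_subtype,
    ← Nat.card_eq_fintype_card]
  rfl

theorem card_mul_card_filter_linearMap_eq {K V : Type*} [Field K] [Fintype K] [AddCommGroup V]
    [Module K V] [Fintype V] [DecidableEq K] {f : V →ₗ[K] K} (hf : f ≠ 0) (c : K) :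
    Fintype.card K * #{x | f x = c} = Fintype.card V := by
  have hfin : Module.finrank K (LinearMap.ker f) + 1 = Module.finrank K V :=
    Module.Dual.finrank_ker_add_one_of_ne_zero hf
  rw [card_filter_linearMap_eq f (LinearMap.range_eq_top.mpr (LinearMap.surjective hf) ▸ trivial),
    Module.natCard_eq_pow_finrank (K := K), Nat.card_eq_fintype_card, ← pow_succ', hfin,
    ← Module.card_eq_pow_finrank]

theorem pow_card_eq_self_iff {K L : Type*} [Field K] [Fintype K] [Field L] [Finite L]
    [Algebra K L] {x : L} :
    x ^ Fintype.card K = x ↔ x ∈ Set.range (algebraMap K L) := by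
  constructor
  · intro hx
    rw [IsGalois.mem_range_algebraMap_iff_fixed]
    intro σ
    obtain ⟨i, rfl⟩ := (FiniteField.bijective_frobeniusAlgEquivOfAlgebraic_pow K L).2 σ
    rw [AlgEquiv.coe_pow, FiniteField.coe_frobeniusAlgEquivOfAlgebraic]
    exact Function.iterate_fixed hx _
  · rintro ⟨a, rfl⟩
    rw [← map_pow, FiniteField.pow_card]

theorem card_filter_pow_card_eq_self (K L : Type*) [Field K] [Fintype K] [Field L] [Fintype L]
    [DecidableEq L] [Algebra K L] :
    #{x : L | x ^ Fintype.card K = x} = Fintype.card K :=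
  calc #{x : L | x ^ Fintype.card K = x} = #(Finset.univ.image (algebraMap K L)) := by
        congr 1
        ext x
        simp [pow_card_eq_self_iff (K := K)]
    _ = Fintype.card K := Finset.card_image_of_injective _ (algebraMap K L).injective

theorem traceForm_ne_zero {K L : Type*} [Field K] [Field L] [Algebra K L] [FiniteDimensional K L]
    [Algebra.IsSeparable K L] {γ : L} (hγ : γ ≠ 0) : Algebra.traceForm K L γ ≠ 0 := fun h =>
  hγ ((traceForm_nondegenerate K L).1 γ fun x => LinearMap.congr_fun h x)

theorem traceForm_algebraMap_right {R S : Type*} [CommRing R] [CommRing S] [Algebra R S] {γ : S}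
    (hγ : Algebra.trace R S γ = 0) (a : R) :
    Algebra.traceForm R S γ (algebraMap R S a) = 0 := by
  rw [Algebra.algebraMap_eq_smul_one, map_smul, Algebra.traceForm_apply, mul_one, hγ, smul_zero]

theorem exists_isPrimitiveRoot_of_dvd_card_sub_one {F : Type*} [Field F] [Fintype F] {n : ℕ}
    (hn : n ∣ Fintype.card F - 1) : ∃ ζ : F, IsPrimitiveRoot ζ n := by
  obtain ⟨g, hg⟩ := IsCyclic.exists_ofOrder_eq_natCard (α := Fˣ)
  obtain ⟨k, hk⟩ := hn
  have hcard : orderOf g = k * n := by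
    rw [hg, Nat.card_units, Nat.card_eq_fintype_card, hk, mul_comm]
  exact ⟨_, IsPrimitiveRoot.coe_units_iff.mpr
    ((IsPrimitiveRoot.orderOf g).pow (orderOf_pos g) hcard)⟩

theorem card_filter_pow_eq_pow {F : Type*} [Field F] [Fintype F] [DecidableEq F] {n : ℕ}
    (hn : n ∣ Fintype.card F - 1) {a : F} (ha : a ≠ 0) : #{x : F | x ^ n = a ^ n} = n := by
  obtain ⟨ζ, hζ⟩ := exists_isPrimitiveRoot_of_dvd_card_sub_one hn
  have hn0 : 0 < n := Nat.pos_of_dvd_of_pos hn (Nat.sub_pos_of_lt Fintype.one_lt_card)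
  calc #{x : F | x ^ n = a ^ n} = #(Polynomial.nthRoots n (a ^ n)).toFinset := by
        congr 1
        ext x
        simp [Polynomial.mem_nthRoots hn0]
    _ = n := by
        rw [Multiset.toFinset_card_of_nodup (hζ.nthRoots_nodup (pow_ne_zero n ha)),
          hζ.card_nthRoots, if_pos ⟨a, rfl⟩]

theorem dvd_card_filter_of_pow {F : Type*} [Field F] [Fintype F] {n : ℕ}
    (hn : n ∣ Fintype.card F - 1) (p : F → Prop) [DecidablePred p] (hp : ¬ p 0) :
    n ∣ #{x : F | p (x ^ n)} := by
  classical
  have hn0 : n ≠ 0 := (Nat.pos_of_dvd_of_pos hn (Nat.sub_pos_of_lt Fintype.one_lt_card)).ne'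
  rw [Finset.card_eq_sum_card_image (fun x => x ^ n)]
  refine Finset.dvd_sum fun z hz => ?_
  obtain ⟨a, ha, rfl⟩ := Finset.mem_image.mp hz
  have hpa : p (a ^ n) := (Finset.mem_filter.mp ha).2
  have ha0 : a ≠ 0 := by
    rintro rfl
    exact hp (by rwa [zero_pow hn0] at hpa)
  have hfiber (x : F) : p (x ^ n) ∧ x ^ n = a ^ n ↔ x ^ n = a ^ n :=
    and_iff_right_of_imp fun hx => hx ▸ hpa
  rw [Finset.filter_filter, Finset.filter_congr fun x _ => hfiber x, card_filter_pow_eq_pow hn ha0]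

theorem exists_intermediateField_finrank_eq {K F : Type*} [Field K] [Field F] [Finite F]
    [Algebra K F] {d : ℕ} (hd : d ∣ Module.finrank K F) :
    ∃ E : IntermediateField K F, Module.finrank K E = d := by
  have : Finite K := Finite.of_injective _ (algebraMap K F).injective
  obtain ⟨p, _⟩ := CharP.exists K
  have : Fact p.Prime := ⟨CharP.char_is_prime K p⟩
  have : NeZero d := ⟨(Nat.pos_of_dvd_of_pos hd Module.finrank_pos).ne'⟩
  obtain ⟨φ⟩ := FiniteField.nonempty_algHom_of_finrank_dvd (F := K)
    (K := FiniteField.Extension K p d) (L := F) (by rwa [FiniteField.finrank_extension])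
  exact ⟨φ.fieldRange, (AlgEquiv.ofInjectiveField φ).toLinearEquiv.finrank_eq.symm.trans
    (FiniteField.finrank_extension K p d)⟩

theorem exists_subfield_card_eq {F : Type*} [Field F] [Fintype F] {Q d : ℕ} (hQ : IsPrimePow Q)
    (hF : Fintype.card F = Q ^ d) :
    ∃ K : Subfield F, Nat.card K = Q ∧ Module.finrank K F = d := by
  have hQ1 : 1 < Q := hQ.one_lt
  obtain ⟨p, k, hp, -, rfl⟩ := hQ
  have : Fact p.Prime := ⟨hp.nat_prime⟩
  have : CharP F p := charP_of_card_eq_prime_pow (hF.trans (pow_mul p k d).symm)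
  let := ZMod.algebra F p
  have hfinrank : Module.finrank (ZMod p) F = k * d := by
    have hcard := Module.card_eq_pow_finrank (K := ZMod p) (V := F)
    rw [ZMod.card, hF, ← pow_mul] at hcard
    exact Nat.pow_right_injective hp.nat_prime.two_le hcard.symm
  obtain ⟨E, hE⟩ := exists_intermediateField_finrank_eq (d := k) (hfinrank ▸ dvd_mul_right k d)
  have hEcard : Nat.card E.toSubfield = p ^ k := by
    have hcard := Module.natCard_eq_pow_finrank (K := ZMod p) (V := E)
    rwa [hE, Nat.card_zmod] at hcard
  refine ⟨E.toSubfield, hEcard, ?_⟩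
  have hcard := Module.natCard_eq_pow_finrank (K := E.toSubfield) (V := F)
  rw [hEcard, Nat.card_eq_fintype_card, hF] at hcard
  exact Nat.pow_right_injective hQ1 hcard.symm

end FiniteField

section Quadratic

variable {K F : Type*} [Field K] [Fintype K] [Field F] [Finite F] [Algebra K F]

theorem exists_ne_zero_pow_card_eq_neg (h : Even (Module.finrank K F)) :
    ∃ γ : F, γ ≠ 0 ∧ γ ^ Fintype.card K = -γ := by
  obtain ⟨E, hE⟩ := exists_intermediateField_finrank_eq (d := 2) h.two_dvd
  have hker : LinearMap.ker (Algebra.trace K E) ≠ ⊥ :=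
    LinearMap.ker_ne_bot_of_finrank_lt (by rw [Module.finrank_self, hE]; exact one_lt_two)
  obtain ⟨γ, hγ, hγ0⟩ := (Submodule.ne_bot_iff _).mp hker
  have htrace := FiniteField.algebraMap_trace_eq_sum_pow K E γ
  simp only [LinearMap.mem_ker.mp hγ, hE, Finset.sum_range_succ, Finset.sum_range_zero, map_zero,
    zero_add, pow_zero, pow_one, Nat.card_eq_fintype_card] at htrace
  rw [eq_comm, add_eq_zero_iff_neg_eq, eq_comm] at htrace
  exact ⟨γ, by simpa using hγ0, by exact_mod_cast congrArg (algebraMap E F) htrace⟩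

theorem exists_pow_card_add_one_eq_algebraMap (h : Even (Module.finrank K F)) (c : K) :
    ∃ a : F, a ^ (Fintype.card K + 1) = algebraMap K F c := by
  obtain ⟨E, hE⟩ := exists_intermediateField_finrank_eq (d := 2) h.two_dvd
  obtain ⟨a, rfl⟩ := FiniteField.norm_surjective K E c
  refine ⟨a, ?_⟩
  have hnorm : algebraMap K E (Algebra.norm K a) = a ^ (Fintype.card K + 1) := by
    simp [FiniteField.algebraMap_norm_eq_pow_sum, hE, Finset.sum_range_succ, add_comm]
  rw [IsScalarTower.algebraMap_apply K E F, hnorm, map_pow]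
  rfl

theorem card_filter_pow_card_sq_eq_self [Fintype F] [DecidableEq F]
    (h : Even (Module.finrank K F)) :
    #{x : F | x ^ Fintype.card K ^ 2 = x} = Fintype.card K ^ 2 := by
  obtain ⟨E, hE⟩ := exists_intermediateField_finrank_eq (d := 2) h.two_dvd
  have := Fintype.ofFinite E
  rw [← hE, ← Module.card_eq_pow_finrank (K := K) (V := E), card_filter_pow_card_eq_self]

theorem trace_eq_zero_of_pow_card_eq_neg (h : Even (Module.finrank K F)) {γ : F}
    (hγ : γ ^ Fintype.card K = -γ) : Algebra.trace K F γ = 0 := by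
  have hpow (i : ℕ) : γ ^ Fintype.card K ^ i = (-1) ^ i * γ := by
    induction i with
    | zero => simp
    | succ i ih =>
      have hfrob :
          FiniteField.frobeniusAlgHom K F ((-1) ^ i * γ) = (-1) ^ i * γ ^ Fintype.card K := by
        rw [map_mul, map_pow, map_neg, map_one, FiniteField.coe_frobeniusAlgHom]
      rw [pow_succ, pow_mul, ih, pow_succ, mul_assoc, neg_one_mul, ← hγ, ← hfrob]
      rfl
  rw [← map_eq_zero_iff _ (algebraMap K F).injective, FiniteField.algebraMap_trace_eq_sum_pow,
    Nat.card_eq_fintype_card]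
  simp [hpow, ← Finset.sum_mul, h]

theorem traceForm_pow_card {γ : F} (hγ : γ ^ Fintype.card K = -γ) (x : F) :
    Algebra.traceForm K F γ (x ^ Fintype.card K) = -Algebra.traceForm K F γ x := by
  have htrace : Algebra.trace K F ((γ * x) ^ Fintype.card K) = Algebra.trace K F (γ * x) :=
    Algebra.trace_eq_of_algEquiv (FiniteField.frobeniusAlgEquivOfAlgebraic K F) (γ * x)
  rw [mul_pow, hγ, neg_mul, map_neg] at htrace
  rw [Algebra.traceForm_apply, Algebra.traceForm_apply, ← htrace, neg_neg]

variable (K F) in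
/-- The `K`-linear map `y ↦ y ^ |K| + y`, the left-hand side of the Hermitian equation
`y ^ |K| + y = x ^ (|K| + 1)`. -/
noncomputable def frobeniusAddId : F →ₗ[K] F :=
  (FiniteField.frobeniusAlgHom K F).toLinearMap + LinearMap.id

omit [Finite F] in
theorem frobeniusAddId_apply (y : F) : frobeniusAddId K F y = y ^ Fintype.card K + y :=
  rfl

theorem ker_frobeniusAddId {γ : F} (hγ0 : γ ≠ 0) (hγ : γ ^ Fintype.card K = -γ) :
    LinearMap.ker (frobeniusAddId K F) = K ∙ γ := by
  ext y
  have hdiv : (y / γ) ^ Fintype.card K = y / γ ↔ y ^ Fintype.card K + y = 0 := by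
    rw [div_pow, hγ, div_neg, neg_eq_iff_add_eq_zero, ← add_div, div_eq_zero_iff, or_iff_left hγ0]
  rw [LinearMap.mem_ker, frobeniusAddId_apply, ← hdiv, pow_card_eq_self_iff,
    Submodule.mem_span_singleton, Set.mem_range]
  simp_rw [eq_div_iff hγ0, Algebra.smul_def]

theorem range_frobeniusAddId {γ : F} (hγ0 : γ ≠ 0) (hγ : γ ^ Fintype.card K = -γ) :
    LinearMap.range (frobeniusAddId K F) = LinearMap.ker (Algebra.traceForm K F γ) := by
  refine Submodule.eq_of_le_of_finrank_eq ?_ ?_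
  · rintro _ ⟨y, rfl⟩
    rw [LinearMap.mem_ker, frobeniusAddId_apply, map_add, traceForm_pow_card hγ, neg_add_cancel]
  · have hrank := LinearMap.finrank_range_add_finrank_ker (frobeniusAddId K F)
    rw [ker_frobeniusAddId hγ0 hγ, finrank_span_singleton hγ0,
      ← Module.Dual.finrank_ker_add_one_of_ne_zero (traceForm_ne_zero (K := K) hγ0)] at hrank
    exact Nat.add_right_cancel hrank

theorem card_filter_pow_card_add_self_eq [Fintype F] [DecidableEq F] [DecidableEq K] {γ : F}
    (hγ0 : γ ≠ 0) (hγ : γ ^ Fintype.card K = -γ) (z : F) :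
    #{y : F | y ^ Fintype.card K + y = z} =
      if Algebra.traceForm K F γ z = 0 then Fintype.card K else 0 := by
  split_ifs with hz
  · rw [← LinearMap.mem_ker, ← range_frobeniusAddId hγ0 hγ] at hz
    have := card_filter_linearMap_eq _ hz
    rw [ker_frobeniusAddId hγ0 hγ, Module.natCard_eq_pow_finrank (K := K),
      finrank_span_singleton hγ0, pow_one, Nat.card_eq_fintype_card] at this
    exact this
  · rw [Finset.card_eq_zero, Finset.filter_eq_empty_iff]
    rintro y - rfl
    exact hz (by rw [map_add, traceForm_pow_card hγ, neg_add_cancel])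

end Quadratic

section Hermitian

variable {K F : Type*} [Field K] [Fintype K] [Field F] [Algebra K F]

variable (K) in
/-- The form `x ↦ Tr(γ x ^ (|K| + 1))`, whose value decides whether `x ^ (|K| + 1)` has the form
`y ^ |K| + y`. -/
noncomputable def hermitianForm (γ x : F) : K :=
  Algebra.traceForm K F γ (x ^ (Fintype.card K + 1))

theorem hermitianForm_mul {γ a : F} {c : K} (ha : a ^ (Fintype.card K + 1) = algebraMap K F c)
    (x : F) : hermitianForm K γ (a * x) = c * hermitianForm K γ x := by
  rw [hermitianForm, mul_pow, ha, ← Algebra.smul_def, map_smul, smul_eq_mul, hermitianForm]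

theorem hermitianForm_add_pow_card [Finite F] {γ : F} (hγ : γ ^ Fintype.card K = -γ) (x v : F) :
    hermitianForm K γ (x + v ^ Fintype.card K) = hermitianForm K γ x - hermitianForm K γ v +
      Algebra.traceForm K F (γ * (v ^ Fintype.card K ^ 2 - v)) x := by
  have hfrob : (x + v ^ Fintype.card K) ^ Fintype.card K =
      x ^ Fintype.card K + v ^ Fintype.card K ^ 2 := by
    rw [sq, pow_mul]
    exact map_add (FiniteField.frobeniusAlgHom K F) _ _
  have hexpand : (x + v ^ Fintype.card K) ^ (Fintype.card K + 1) = x ^ (Fintype.card K + 1) +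
      (x * v) ^ Fintype.card K + (v ^ (Fintype.card K + 1)) ^ Fintype.card K +
        v ^ Fintype.card K ^ 2 * x := by
    rw [pow_succ, hfrob]
    ring
  have hcross : Algebra.traceForm K F (γ * (v ^ Fintype.card K ^ 2 - v)) x =
      Algebra.traceForm K F γ (v ^ Fintype.card K ^ 2 * x) - Algebra.traceForm K F γ (x * v) := by
    simp only [Algebra.traceForm_apply]
    rw [← map_sub]
    ring_nf
  rw [hcross, hermitianForm, hexpand, map_add, map_add, map_add, traceForm_pow_card hγ,
    traceForm_pow_card hγ, hermitianForm, hermitianForm]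
  ring

theorem hermitianForm_eq_zero_of_pow_card_sq_eq_self [Finite F] {γ : F}
    (hγ : Algebra.trace K F γ = 0) {v : F} (hv : v ^ Fintype.card K ^ 2 = v) :
    hermitianForm K γ v = 0 := by
  have hnorm : (v ^ (Fintype.card K + 1)) ^ Fintype.card K = v ^ (Fintype.card K + 1) := by
    rw [← pow_mul, add_mul, one_mul, ← sq, pow_add, hv, pow_succ']
  obtain ⟨a, ha⟩ := pow_card_eq_self_iff.mp hnorm
  rw [hermitianForm, ← ha, traceForm_algebraMap_right hγ]

variable [Fintype F]

theorem card_add_one_dvd_card_sub_one (h : Even (Module.finrank K F)) :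
    Fintype.card K + 1 ∣ Fintype.card F - 1 := by
  obtain ⟨s, hs⟩ := h.two_dvd
  rw [Module.card_eq_pow_finrank (K := K) (V := F), hs, pow_mul]
  have hsq : Fintype.card K ^ 2 - 1 = (Fintype.card K + 1) * (Fintype.card K - 1) := by
    simpa using Nat.pow_two_sub_pow_two (Fintype.card K) 1
  exact (Dvd.intro _ hsq.symm).trans (Nat.sub_one_dvd_pow_sub_one _ s)

section DecidableEq

variable [DecidableEq K]

theorem card_filter_hermitianForm_eq_of_ne_zero (h : Even (Module.finrank K F)) (γ : F) {c d : K}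
    (hc : c ≠ 0) (hd : d ≠ 0) :
    #{x : F | hermitianForm K γ x = c} = #{x : F | hermitianForm K γ x = d} := by
  obtain ⟨a, ha⟩ := exists_pow_card_add_one_eq_algebraMap (F := F) h (d / c)
  have ha0 : a ≠ 0 := by
    rintro rfl
    rw [zero_pow (Nat.succ_ne_zero _), eq_comm, map_eq_zero, div_eq_zero_iff] at ha
    exact ha.elim hd hc
  refine Finset.card_equiv (Equiv.mulLeft₀ a ha0) fun x => ?_
  simp only [Finset.mem_filter, Finset.mem_univ, true_and, Equiv.mulLeft₀_apply,
    hermitianForm_mul ha]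
  rw [div_mul_eq_mul_div, div_eq_iff hc, mul_right_inj' hd]

theorem card_mul_card_filter_hermitianForm_add_pow_card [DecidableEq F] {γ : F} (hγ0 : γ ≠ 0)
    (hγ : γ ^ Fintype.card K = -γ) (htr : Algebra.trace K F γ = 0) (v : F) :
    Fintype.card K * #{x : F | hermitianForm K γ x = hermitianForm K γ (x + v ^ Fintype.card K)} =
      if v ^ Fintype.card K ^ 2 = v then Fintype.card K * Fintype.card F else Fintype.card F := by
  have hiff (x : F) : hermitianForm K γ x = hermitianForm K γ (x + v ^ Fintype.card K) ↔
      Algebra.traceForm K F (γ * (v ^ Fintype.card K ^ 2 - v)) x = hermitianForm K γ v := by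
    rw [hermitianForm_add_pow_card hγ, sub_add_eq_add_sub, add_sub_assoc, left_eq_add, sub_eq_zero]
  simp_rw [hiff]
  split_ifs with hv
  · simp [hv, hermitianForm_eq_zero_of_pow_card_sq_eq_self htr hv]
  · exact card_mul_card_filter_linearMap_eq
      (traceForm_ne_zero (mul_ne_zero hγ0 (sub_ne_zero.mpr hv))) _

theorem card_filter_hermitianForm_eq_hermitianForm (h : Even (Module.finrank K F)) {γ : F}
    (hγ0 : γ ≠ 0) (hγ : γ ^ Fintype.card K = -γ) :
    Fintype.card K * #{p : F × F | hermitianForm K γ p.1 = hermitianForm K γ p.2} +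
        Fintype.card K ^ 2 * Fintype.card F =
      Fintype.card K ^ 3 * Fintype.card F + Fintype.card F ^ 2 := by
  classical
  have hshear : #{p : F × F | hermitianForm K γ p.1 = hermitianForm K γ p.2} =
      ∑ v : F, #{x : F | hermitianForm K γ x = hermitianForm K γ (x + v ^ Fintype.card K)} := by
    rw [← card_filter_prod (fun z : F × F => hermitianForm K γ z.2 =
      hermitianForm K γ (z.2 + z.1 ^ Fintype.card K))]
    symm
    refine Finset.card_equiv ((Equiv.prodComm F F).trans (Equiv.prodShear (Equiv.refl F) fun x =>
      (FiniteField.frobeniusAlgEquivOfAlgebraic K F).toEquiv.trans (Equiv.addLeft x))) fun z => ?_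
    simp
  have hfixed := card_filter_pow_card_sq_eq_self h
  have hmoved := Finset.card_filter_add_card_filter_not (s := Finset.univ)
    fun x : F => x ^ Fintype.card K ^ 2 = x
  rw [hfixed, Finset.card_univ] at hmoved
  simp_rw [hshear, Finset.mul_sum, card_mul_card_filter_hermitianForm_add_pow_card hγ0 hγ
    (trace_eq_zero_of_pow_card_eq_neg h hγ)]
  rw [Finset.sum_ite, Finset.sum_const, Finset.sum_const, hfixed, smul_eq_mul, smul_eq_mul]
  linear_combination Fintype.card F * hmoved

theorem dvd_card_filter_hermitianForm_eq (h : Even (Module.finrank K F)) (γ : F) {c : K}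
    (hc : c ≠ 0) : Fintype.card K + 1 ∣ #{x : F | hermitianForm K γ x = c} :=
  dvd_card_filter_of_pow (card_add_one_dvd_card_sub_one h) (fun z => Algebra.traceForm K F γ z = c)
    (by rw [map_zero]; exact hc.symm)

-- With `S = a - b`, the two moments give `S ^ 2 = q ^ 2 * n`, and the divisibilities fix the sign.
theorem sub_eq_neg_pow_of_moments {q n a b : ℤ} {s : ℕ} (hq : 2 ≤ q) (hn : n = q ^ (2 * s))
    (hfirst : a + (q - 1) * b = n)
    (hsecond : q * (a ^ 2 + (q - 1) * b ^ 2) + q ^ 2 * n = q ^ 3 * n + n ^ 2)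
    (hb : q + 1 ∣ b) (hn1 : q + 1 ∣ n - 1) : a - b = (-q) ^ (s + 1) := by
  have hsq : (a - b) ^ 2 = ((-q) ^ (s + 1)) ^ 2 := by
    have hscaled : (q - 1) * (a - b) ^ 2 = (q - 1) * (q ^ 2 * n) := by
      linear_combination hsecond - (a + (q - 1) * b + n) * hfirst
    rw [mul_left_cancel₀ (by omega) hscaled, ← pow_mul, mul_comm, mul_comm (s + 1) 2,
      (even_two_mul (s + 1)).neg_pow, hn]
    ring
  have hmod : q + 1 ∣ (a - b) - 1 := by
    have := dvd_sub hn1 (hb.mul_left q)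
    rwa [← hfirst, show a + (q - 1) * b - 1 - q * b = a - b - 1 by ring] at this
  have hpow : q + 1 ∣ (-q) ^ (s + 1) - 1 := by
    have := sub_one_dvd_pow_sub_one (-q) (s + 1)
    rwa [← neg_dvd, show -(-q - 1) = q + 1 by ring] at this
  rcases sq_eq_sq_iff_eq_or_eq_neg.mp hsq with hS | hS
  · exact hS
  · have htwo : q + 1 ∣ 2 := by
      have := dvd_add hmod hpow
      rwa [hS, show -(-q) ^ (s + 1) - 1 + ((-q) ^ (s + 1) - 1) = -2 by ring, dvd_neg] at this
    exact absurd (Int.le_of_dvd two_pos htwo) (by omega)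

theorem sum_card_filter_hermitianForm (h : Even (Module.finrank K F)) (γ : F) (g : ℕ → ℕ) {c : K}
    (hc : c ≠ 0) :
    ∑ d, g #{x : F | hermitianForm K γ x = d} = g #{x : F | hermitianForm K γ x = 0} +
      (Fintype.card K - 1) * g #{x : F | hermitianForm K γ x = c} := by
  rw [← Finset.add_sum_erase _ _ (Finset.mem_univ 0), Finset.sum_congr rfl fun d hd =>
    congrArg g (card_filter_hermitianForm_eq_of_ne_zero h γ (Finset.ne_of_mem_erase hd) hc),
    Finset.sum_const, Finset.card_erase_of_mem (Finset.mem_univ 0), Finset.card_univ, smul_eq_mul]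

theorem card_filter_hermitianForm_first_moment (h : Even (Module.finrank K F)) (γ : F) {c : K}
    (hc : c ≠ 0) :
    (#{x : F | hermitianForm K γ x = 0} : ℤ) +
      (Fintype.card K - 1) * #{x : F | hermitianForm K γ x = c} = Fintype.card F := by
  have hsum := sum_card_filter_hermitianForm h γ id hc
  simp only [id] at hsum
  rw [← Finset.card_eq_sum_card_fiberwise fun _ _ => Finset.mem_coe.mpr (Finset.mem_univ _),
    Finset.card_univ] at hsum
  rw [hsum]
  push_cast [Nat.cast_sub Fintype.one_lt_card.le]
  rfl

theorem card_filter_hermitianForm_zero_sub {s : ℕ} (h : Module.finrank K F = 2 * s) {γ : F}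
    (hγ0 : γ ≠ 0) (hγ : γ ^ Fintype.card K = -γ) {c : K} (hc : c ≠ 0) :
    (#{x : F | hermitianForm K γ x = 0} : ℤ) - #{x : F | hermitianForm K γ x = c} =
        (-Fintype.card K) ^ (s + 1) := by
  have heven : Even (Module.finrank K F) := h ▸ even_two_mul s
  have hK : 1 < Fintype.card K := Fintype.one_lt_card
  have hsecond := card_filter_hermitianForm_eq_hermitianForm heven hγ0 hγ
  rw [← sum_card_filter_sq, sum_card_filter_hermitianForm heven γ (· ^ 2) hc] at hsecond
  have hdvd := card_add_one_dvd_card_sub_one heven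
  refine sub_eq_neg_pow_of_moments (n := Fintype.card F) (by exact_mod_cast hK) ?_
    (card_filter_hermitianForm_first_moment heven γ hc) ?_
    (by exact_mod_cast dvd_card_filter_hermitianForm_eq heven γ hc) ?_
  · exact_mod_cast h ▸ Module.card_eq_pow_finrank (K := K) (V := F)
  · have := congrArg (Nat.cast (R := ℤ)) hsecond
    push_cast [Nat.cast_sub hK.le] at this
    exact this
  · rw [← Nat.cast_one, ← Nat.cast_sub Fintype.one_lt_card.le]
    exact_mod_cast hdvd

theorem card_hermitian_points [DecidableEq F] {γ : F} (hγ0 : γ ≠ 0)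
    (hγ : γ ^ Fintype.card K = -γ) (b : F) :
    #{p : F × F | p.1 ^ (Fintype.card K + 1) = p.2 ^ Fintype.card K + p.2 - b} =
      Fintype.card K * #{x : F | hermitianForm K γ x = -Algebra.traceForm K F γ b} := by
  have hfiber (x : F) :
      #{y : F | x ^ (Fintype.card K + 1) = y ^ Fintype.card K + y - b} =
        if hermitianForm K γ x = -Algebra.traceForm K F γ b then Fintype.card K else 0 := by
    simp_rw [eq_sub_iff_add_eq, eq_comm (a := x ^ (Fintype.card K + 1) + b)]
    rw [card_filter_pow_card_add_self_eq hγ0 hγ]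
    simp only [map_add, hermitianForm, eq_neg_iff_add_eq_zero]
  rw [card_filter_prod]
  simp_rw [hfiber]
  rw [← Finset.sum_filter, Finset.sum_const, smul_eq_mul, mul_comm]

end DecidableEq

theorem exists_card_hermitian_points [DecidableEq F] {s : ℕ} (h : Module.finrank K F = 2 * s)
    (hs : Odd s ∨ Fintype.card K = 2) :
    ∃ b : F, #{p : F × F | p.1 ^ (Fintype.card K + 1) = p.2 ^ Fintype.card K + p.2 - b} =
      Fintype.card F + Fintype.card K * (Fintype.card K - 1) * Fintype.card K ^ s := by
  classical
  have heven : Even (Module.finrank K F) := h ▸ even_two_mul s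
  obtain ⟨γ, hγ0, hγ⟩ := exists_ne_zero_pow_card_eq_neg (K := K) (F := F) heven
  have hfirst := card_filter_hermitianForm_first_moment heven γ (one_ne_zero (α := K))
  have hdiff := card_filter_hermitianForm_zero_sub h hγ0 hγ (one_ne_zero (α := K))
  simp_rw [card_hermitian_points hγ0 hγ]
  by_cases hodd : Odd s
  · refine ⟨0, ?_⟩
    rw [hodd.add_one.neg_pow] at hdiff
    zify [Fintype.one_lt_card (α := K).le]
    rw [map_zero, neg_zero]
    linear_combination (Fintype.card K - 1 : ℤ) * hdiff + hfirst
  · have hK : Fintype.card K = 2 := hs.resolve_left hodd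
    obtain ⟨b, hb⟩ := LinearMap.surjective (traceForm_ne_zero (K := K) hγ0) (-1)
    refine ⟨b, ?_⟩
    rw [(Nat.not_odd_iff_even.mp hodd).add_one.neg_pow] at hdiff
    zify [Fintype.one_lt_card (α := K).le]
    rw [hK, Nat.cast_two] at hfirst hdiff ⊢
    rw [hb, neg_neg]
    linear_combination hfirst - hdiff

end Hermitian

section Superelliptic

open Polynomial

theorem card_filter_add_mul_eq_zero_le_one {F ι : Type*} [Field F] [DecidableEq F] [Fintype ι]
    {x : ι → F} (hx : Function.Injective x) {a b : F} (hab : ¬ (a = 0 ∧ b = 0)) :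
    #{j | a + x j * b = 0} ≤ 1 := by
  refine Finset.card_le_one.mpr fun i hi j hj => hx ?_
  simp only [Finset.mem_filter, Finset.mem_univ, true_and] at hi hj
  have hb : b ≠ 0 := by
    rintro rfl
    exact hab ⟨by simpa using hi, rfl⟩
  exact mul_right_cancel₀ hb (add_left_cancel (hi.trans hj.symm))

theorem sum_rootMultiplicity_le_natDegree {F ι : Type*} [Field F] [Fintype ι] {y : ι → F}
    (hy : Function.Injective y) (p : F[X]) : ∑ i, p.rootMultiplicity (y i) ≤ p.natDegree := by
  classical
  calc ∑ i, p.rootMultiplicity (y i) = ∑ z ∈ Finset.univ.map ⟨y, hy⟩, p.roots.count z := by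
        simp [count_roots]
    _ ≤ ∑ z ∈ p.roots.toFinset, p.roots.count z := by
        refine Finset.sum_le_sum_of_ne_zero fun z _ hz => ?_
        exact Multiset.mem_toFinset.mpr (Multiset.count_ne_zero.mp hz)
    _ = p.roots.card := Multiset.toFinset_sum_count_eq _
    _ ≤ p.natDegree := card_roots' p

/-- The norm of the function `p₀ + X * p₁` from the function field of the curve `X ^ n = G(Y)`
down to the rational functions in `Y`. -/
noncomputable def superellipticNorm {F : Type*} [Field F] (n : ℕ) (G p₀ p₁ : F[X]) : F[X] :=
  p₀ ^ n - G * (-p₁) ^ n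

variable {F : Type*} [Field F] {n t : ℕ} {G p₀ p₁ : F[X]}

theorem superellipticNorm_ne_zero (hn : n ≠ 0) (hG : ¬ n ∣ G.natDegree)
    (hp : ¬ (p₀ = 0 ∧ p₁ = 0)) : superellipticNorm n G p₀ p₁ ≠ 0 := by
  intro h
  have hG0 : G ≠ 0 := by
    rintro rfl
    simp at hG
  have hEq : p₀ ^ n = G * (-p₁) ^ n := sub_eq_zero.mp h
  have hp₁ : p₁ ≠ 0 := by
    rintro rfl
    rw [neg_zero, zero_pow hn, mul_zero] at hEq
    exact hp ⟨pow_eq_zero_iff hn |>.mp hEq, rfl⟩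
  have hdeg := congrArg natDegree hEq
  rw [natDegree_mul hG0 (pow_ne_zero n (neg_ne_zero.mpr hp₁)), natDegree_pow, natDegree_pow] at hdeg
  exact hG ((Nat.dvd_add_left (dvd_mul_right n _)).mp (Dvd.intro _ hdeg))

theorem natDegree_superellipticNorm_le (hG : G.natDegree ≤ n) (hp₀ : p₀ ∈ degreeLT F (t + 1))
    (hp₁ : p₁ ∈ degreeLT F t) : (superellipticNorm n G p₀ p₁).natDegree ≤ t * n := by
  have hdeg₀ : p₀.natDegree ≤ t :=
    natDegree_le_iff_degree_le.mpr (mem_degreeLE.mp (degreeLT_succ_eq_degreeLE (R := F) ▸ hp₀))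
  have hpow₀ : (p₀ ^ n).natDegree ≤ t * n := by
    rw [natDegree_pow, mul_comm]
    exact Nat.mul_le_mul_right n hdeg₀
  refine (natDegree_sub_le_of_le hpow₀ ?_).trans_eq (max_self _)
  rcases eq_or_ne p₁ 0 with rfl | hp₁0
  · rcases eq_or_ne n 0 with rfl | hn
    · simpa using hG
    · simp [hn]
  · have hdeg₁ := (natDegree_lt_iff_degree_lt hp₁0).mpr (mem_degreeLT.mp hp₁)
    calc (G * (-p₁) ^ n).natDegree ≤ n + n * p₁.natDegree := by
          refine natDegree_mul_le_of_le hG ?_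
          rw [natDegree_pow, natDegree_neg]
      _ = n * (p₁.natDegree + 1) := by ring
      _ ≤ n * t := Nat.mul_le_mul_left n hdeg₁
      _ = t * n := mul_comm n t

theorem eval_superellipticNorm_eq_zero {x y : F} (hxy : x ^ n = G.eval y)
    (hzero : p₀.eval y + x * p₁.eval y = 0) : (superellipticNorm n G p₀ p₁).eval y = 0 := by
  rw [superellipticNorm, eval_sub, eval_mul, eval_pow, eval_pow, eval_neg, ← hxy, ← mul_pow,
    eq_neg_of_add_eq_zero_left hzero, mul_neg, sub_self]

variable [DecidableEq F]

theorem card_filter_eval_eq_zero_le_rootMultiplicity {x : Fin n → F} {y : F}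
    (hx : Function.Injective x) (hxy : ∀ j, x j ^ n = G.eval y)
    (hnorm : superellipticNorm n G p₀ p₁ ≠ 0) :
    #{j | p₀.eval y + x j * p₁.eval y = 0} ≤
      (superellipticNorm n G p₀ p₁).rootMultiplicity y := by
  by_cases hroot : p₀.eval y = 0 ∧ p₁.eval y = 0
  · refine (Finset.card_le_univ _).trans ?_
    rw [Fintype.card_fin, le_rootMultiplicity_iff hnorm]
    have hdvd₀ := dvd_iff_isRoot.mpr hroot.1
    have hdvd₁ := dvd_iff_isRoot.mpr hroot.2
    exact dvd_sub (pow_dvd_pow_of_dvd hdvd₀ n)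
      ((pow_dvd_pow_of_dvd (hdvd₁.neg_right) n).mul_left G)
  · rcases Finset.eq_empty_or_nonempty {j | p₀.eval y + x j * p₁.eval y = 0} with hempty | ⟨j, hj⟩
    · simp [hempty]
    · exact (card_filter_add_mul_eq_zero_le_one hx hroot).trans
        ((rootMultiplicity_pos hnorm).mpr (eval_superellipticNorm_eq_zero (hxy j)
          (Finset.mem_filter.mp hj).2))

theorem sum_card_filter_eval_eq_zero_le {m : ℕ} (hG0 : 0 < G.natDegree) (hG : G.natDegree < n)
    {y : Fin m → F} (hy : Function.Injective y) {x : Fin m → Fin n → F}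
    (hx : ∀ i, Function.Injective (x i))
    (hxy : ∀ i j, x i j ^ n = G.eval (y i)) (hp₀ : p₀ ∈ degreeLT F (t + 1))
    (hp₁ : p₁ ∈ degreeLT F t) (hp : ¬ (p₀ = 0 ∧ p₁ = 0)) :
    ∑ i, #{j | p₀.eval (y i) + x i j * p₁.eval (y i) = 0} ≤ t * n :=
  have hnorm :=
    superellipticNorm_ne_zero (Nat.ne_zero_of_lt hG) (Nat.not_dvd_of_pos_of_lt hG0 hG) hp
  calc ∑ i, #{j | p₀.eval (y i) + x i j * p₁.eval (y i) = 0}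
    _ ≤ ∑ i, (superellipticNorm n G p₀ p₁).rootMultiplicity (y i) := Finset.sum_le_sum fun i _ =>
        card_filter_eval_eq_zero_le_rootMultiplicity (hx i) (hxy i) hnorm
    _ ≤ (superellipticNorm n G p₀ p₁).natDegree := sum_rootMultiplicity_le_natDegree hy _
    _ ≤ t * n := natDegree_superellipticNorm_le hG.le hp₀ hp₁

end Superelliptic

section LocallyRepairable

open Polynomial

theorem card_filter_eq_zero_add_hammingWt {F : Type*} [Zero F] [DecidableEq F] {n : ℕ}
    (v : Fin n → F) : #{k | v k = 0} + hammingWt v = n := by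
  simpa [hammingWt] using Finset.card_filter_add_card_filter_not (s := Finset.univ) (v · = 0)

theorem singletonOptimal_two_mul_add_one {m n t : ℕ} (ht : t ≤ m) (hn : 0 < n) :
    SingletonOptimal (m * n) (2 * t + 1) ((m - t) * n) 2 (n - 1) := by
  have hceil : (2 * t + 1 + 2 - 1) / 2 = t + 1 := by omega
  rw [SingletonOptimal, hceil]
  push_cast [Nat.cast_sub ht, Nat.cast_sub hn]
  ring

variable {F : Type*} [Field F] {m n t : ℕ} {G : F[X]} {x : Fin m → Fin n → F} {y : Fin m → F}

/-- Evaluation of the functions `p₀ + X * p₁` with `deg p₀ ≤ t` and `deg p₁ < t` at the points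
`(x i j, y i)` of an `m × n` grid; coordinate `k` of a codeword belongs to the point with
`i = k.divNat` and `j = k.modNat`. The code is the range of this map. -/
noncomputable def gridEval (t : ℕ) (x : Fin m → Fin n → F) (y : Fin m → F) :
    degreeLT F (t + 1) × degreeLT F t →ₗ[F] (Fin (m * n) → F) where
  toFun p k :=
    (p.1 : F[X]).eval (y k.divNat) + x k.divNat k.modNat * (p.2 : F[X]).eval (y k.divNat)
  map_add' p p' := by
    ext k
    simp only [Prod.fst_add, Prod.snd_add, Submodule.coe_add, eval_add, Pi.add_apply]
    ring
  map_smul' c p := by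
    ext k
    simp only [Prod.smul_fst, Prod.smul_snd, Submodule.coe_smul, eval_smul,
      Pi.smul_apply, smul_eq_mul, RingHom.id_apply]
    ring

theorem gridEval_apply (p : degreeLT F (t + 1) × degreeLT F t)
    (k : Fin (m * n)) : gridEval t x y p k = (p.1 : F[X]).eval (y k.divNat) +
      x k.divNat k.modNat * (p.2 : F[X]).eval (y k.divNat) :=
  rfl

theorem le_hammingWt_gridEval [DecidableEq F] (hG0 : 0 < G.natDegree) (hG : G.natDegree < n)
    (hy : Function.Injective y) (hx : ∀ i, Function.Injective (x i))
    (hxy : ∀ i j, x i j ^ n = G.eval (y i))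
    {p : degreeLT F (t + 1) × degreeLT F t} (hp : p ≠ 0) :
    (m - t) * n ≤ hammingWt (gridEval t x y p) := by
  have hzeros : #{k | gridEval t x y p k = 0} ≤ t * n :=
    (card_filter_fin_mul fun i j => (p.1 : F[X]).eval (y i) + x i j * (p.2 : F[X]).eval (y i) = 0)
      |>.trans_le (sum_card_filter_eval_eq_zero_le hG0 hG hy hx hxy p.1.2 p.2.2 fun h =>
        hp (Prod.ext (Subtype.ext h.1) (Subtype.ext h.2)))
  have htotal := card_filter_eq_zero_add_hammingWt (gridEval t x y p)
  rw [Nat.sub_mul]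
  omega

theorem gridEval_injective (hG0 : 0 < G.natDegree) (hG : G.natDegree < n)
    (hy : Function.Injective y) (hx : ∀ i, Function.Injective (x i))
    (hxy : ∀ i j, x i j ^ n = G.eval (y i)) (htm : t < m) :
    Function.Injective (gridEval t x y) := by
  classical
  refine (injective_iff_map_eq_zero _).mpr fun p hzero => by_contra fun hp => ?_
  have hwt := le_hammingWt_gridEval hG0 hG hy hx hxy hp
  simp only [hzero, hammingWt, Pi.zero_apply, ne_eq, not_true_eq_false, Finset.filter_false,
    Finset.card_empty] at hwt
  exact hwt.not_gt (Nat.mul_pos (Nat.sub_pos_of_lt htm) (Nat.zero_lt_of_lt hG))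

variable [DecidableEq F]

theorem exists_hammingWt_gridEval_eq (hy : Function.Injective y) (htm : t ≤ m) :
    ∃ p ≠ 0, hammingWt (gridEval t x y p) = (m - t) * n := by
  obtain ⟨S, -, hS⟩ :=
    Finset.exists_subset_card_eq (s := (Finset.univ : Finset (Fin m))) (by simpa using htm)
  have hdeg : Lagrange.nodal S y ∈ degreeLT F (t + 1) := by
    rw [mem_degreeLT, Lagrange.degree_nodal, hS]
    exact_mod_cast t.lt_succ_self
  have heval (i : Fin m) : (Lagrange.nodal S y).eval (y i) = 0 ↔ i ∈ S := by
    simp [Lagrange.eval_nodal, Finset.prod_eq_zero_iff, sub_eq_zero, hy.eq_iff]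
  refine ⟨(⟨_, hdeg⟩, 0), fun h => Lagrange.nodal_ne_zero (congrArg (·.1.1) h), ?_⟩
  simp only [hammingWt, gridEval_apply, ZeroMemClass.coe_zero, eval_zero, mul_zero,
    add_zero, ne_eq, heval]
  rw [card_filter_fin_mul fun i _ => i ∉ S]
  simp_rw [Finset.filter_const, apply_ite Finset.card, Finset.card_univ, Finset.card_empty]
  rw [← Finset.sum_filter, Finset.sum_const, Finset.filter_not, Finset.filter_univ_mem,
    Finset.card_univ_sdiff, hS]
  simp

theorem minDistEq_range_gridEval (hG0 : 0 < G.natDegree) (hG : G.natDegree < n)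
    (hy : Function.Injective y) (hx : ∀ i, Function.Injective (x i))
    (hxy : ∀ i j, x i j ^ n = G.eval (y i)) (htm : t < m) :
    MinDistEq (LinearMap.range (gridEval t x y)) ((m - t) * n) := by
  constructor
  · rintro _ ⟨p, rfl⟩ hp
    exact le_hammingWt_gridEval hG0 hG hy hx hxy fun h => hp (by rw [h, map_zero])
  · obtain ⟨p, hp, hwt⟩ := exists_hammingWt_gridEval_eq (x := x) hy htm.le
    have hinj := gridEval_injective hG0 hG hy hx hxy htm
    exact ⟨_, ⟨p, rfl⟩, (map_ne_zero_iff _ hinj).mpr hp, hwt⟩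

theorem isLRC_range_gridEval (hx : ∀ i, Function.Injective (x i)) :
    IsLRC (LinearMap.range (gridEval t x y)) 2 (n - 1) := by
  intro k
  have hrow : #{k' : Fin (m * n) | k'.divNat = k.divNat} = n := by
    simpa using card_filter_divNat_eq_and k.divNat fun _ : Fin n => True
  set R : Finset (Fin (m * n)) := {k' | k'.divNat = k.divNat} with hR
  refine ⟨R, by simp [hR], by omega, ?_⟩
  rintro _ ⟨p, rfl⟩ ⟨l, hl, hpl⟩
  have heval {k' : Fin (m * n)} (hk' : k'.divNat = k.divNat) : gridEval t x y p k' =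
      (p.1 : F[X]).eval (y k.divNat) + x k.divNat k'.modNat * (p.2 : F[X]).eval (y k.divNat) := by
    rw [gridEval_apply, hk']
  have hzeros : #{k' ∈ R | gridEval t x y p k' = 0} ≤ 1 := by
    rw [hR, Finset.filter_filter,
      Finset.filter_congr fun k' _ => and_congr_right fun hk' => by rw [heval hk'],
      card_filter_divNat_eq_and k.divNat fun j =>
        (p.1 : F[X]).eval (y k.divNat) + x k.divNat j * (p.2 : F[X]).eval (y k.divNat) = 0]
    refine card_filter_add_mul_eq_zero_le_one (hx _) fun h => hpl ?_
    rw [heval (Finset.mem_filter.mp hl).2, h.1, h.2, mul_zero, add_zero]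
  have htotal := Finset.card_filter_add_card_filter_not (s := R) (gridEval t x y p · = 0)
  simp only [ne_eq]
  omega

theorem existsOptimalLRC_of_grid (hG0 : 0 < G.natDegree) (hG : G.natDegree < n)
    (hy : Function.Injective y) (hx : ∀ i, Function.Injective (x i))
    (hxy : ∀ i j, x i j ^ n = G.eval (y i)) (htm : t < m) :
    ExistsOptimalLRC F (m * n) (2 * t + 1) ((m - t) * n) 2 (n - 1) := by
  refine ⟨LinearMap.range (gridEval t x y), ?_, minDistEq_range_gridEval hG0 hG hy hx hxy htm,
    isLRC_range_gridEval hx, singletonOptimal_two_mul_add_one htm.le (Nat.zero_lt_of_lt hG)⟩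
  rw [LinearMap.finrank_range_of_inj (gridEval_injective hG0 hG hy hx hxy htm),
    Module.finrank_prod, (degreeLTEquiv F (t + 1)).finrank_eq,
    (degreeLTEquiv F t).finrank_eq, Module.finrank_fin_fun, Module.finrank_fin_fun]
  ring

end LocallyRepairable

section Points

open Polynomial

variable {F : Type*} [Field F] [Fintype F] [DecidableEq F] {n : ℕ}

theorem card_filter_pow_eq (hn : n ∣ Fintype.card F - 1) (z : F) :
    #{x : F | x ^ n = z} =
      (if ∃ a ≠ 0, a ^ n = z then n else 0) + if z = 0 then 1 else 0 := by
  have hn0 : n ≠ 0 := (Nat.pos_of_dvd_of_pos hn (Nat.sub_pos_of_lt Fintype.one_lt_card)).ne'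
  rcases eq_or_ne z 0 with rfl | hz
  · simp +contextual [hn0, Finset.filter_eq']
  by_cases hpow : ∃ a ≠ 0, a ^ n = z
  · obtain ⟨a, ha, rfl⟩ := hpow
    rw [card_filter_pow_eq_pow hn ha, if_pos ⟨a, ha, rfl⟩, if_neg hz, add_zero]
  · rw [if_neg hpow, if_neg hz, Finset.card_eq_zero, Finset.filter_eq_empty_iff]
    rintro a - rfl
    exact hpow ⟨a, ne_zero_pow hn0 hz, rfl⟩

theorem card_superelliptic_points (hn : n ∣ Fintype.card F - 1) {ι : Type*} [Fintype ι]
    (f : ι → F) :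
    #{p : F × ι | p.1 ^ n = f p.2} =
      n * #{i | ∃ a ≠ 0, a ^ n = f i} + #{i | f i = 0} := by
  rw [← Finset.card_equiv (s := {p : ι × F | p.2 ^ n = f p.1}) (Equiv.prodComm ι F) (by simp),
    card_filter_prod]
  simp_rw [card_filter_pow_eq hn, Finset.sum_add_distrib, ← Finset.sum_filter, Finset.sum_const,
    smul_eq_mul, mul_one, mul_comm]

theorem exists_superelliptic_grid {m : ℕ} {G : F[X]} (hn : n ∣ Fintype.card F - 1)
    (hG0 : 0 < G.natDegree) (hG : G.natDegree < n)
    (hm : m ≤ #{p : F × F | p.1 ^ n = G.eval p.2} / n) :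
    ∃ (x : Fin m → Fin n → F) (y : Fin m → F), Function.Injective y ∧
      (∀ i, Function.Injective (x i)) ∧ ∀ i j, x i j ^ n = G.eval (y i) := by
  have hroots : #{y | G.eval y = 0} ≤ G.natDegree :=
    card_le_degree_of_subset_roots fun y hy => by
      rw [mem_roots (ne_zero_of_natDegree_gt hG0)]
      simpa using hy
  rw [card_superelliptic_points hn (G.eval ·), Nat.mul_add_div (Nat.zero_lt_of_lt hG),
    Nat.div_eq_of_lt (hroots.trans_lt hG), add_zero, ← Fintype.card_subtype] at hm
  obtain ⟨y⟩ := Function.Embedding.nonempty_of_card_le ((Fintype.card_fin m).trans_le hm)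
  have hrow (i : Fin m) : ∃ x : Fin n → F, Function.Injective x ∧
      ∀ j, x j ^ n = G.eval (y i : F) := by
    obtain ⟨a, ha0, ha⟩ := (y i).2
    let e := Finset.equivFinOfCardEq (card_filter_pow_eq_pow hn ha0)
    refine ⟨fun j => e.symm j, Subtype.val_injective.comp e.symm.injective, fun j => ?_⟩
    exact (Finset.mem_filter.mp (e.symm j).2).2.trans ha
  choose x hx hxy using hrow
  exact ⟨x, fun i => y i, Subtype.val_injective.comp y.injective, hx, hxy⟩

theorem existsOptimalLRC_of_card_points {m t : ℕ} {G : F[X]} (hn : n ∣ Fintype.card F - 1)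
    (hG0 : 0 < G.natDegree) (hG : G.natDegree < n) (htm : t < m)
    (hm : m ≤ #{p : F × F | p.1 ^ n = G.eval p.2} / n) :
    ExistsOptimalLRC F (m * n) (2 * t + 1) ((m - t) * n) 2 (n - 1) := by
  obtain ⟨x, y, hy, hx, hxy⟩ := exists_superelliptic_grid hn hG0 hG hm
  exact existsOptimalLRC_of_grid hG0 hG hy hx hxy htm

theorem existsOptimalLRC_of_finrank_eq {K : Type*} [Field K] [Fintype K] [Algebra K F]
    {s t m : ℕ} (h : Module.finrank K F = 2 * s) (hs : Odd s ∨ Fintype.card K = 2) (htm : t < m)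
    (hm : m ≤ (Fintype.card F + Fintype.card K * (Fintype.card K - 1) * Fintype.card K ^ s) /
      (Fintype.card K + 1)) :
    ExistsOptimalLRC F (m * (Fintype.card K + 1)) (2 * t + 1)
      ((m - t) * (Fintype.card K + 1)) 2 (Fintype.card K) := by
  obtain ⟨b, hb⟩ := exists_card_hermitian_points h hs
  have hdeg : (X ^ Fintype.card K + X - C b).natDegree =
      Fintype.card K := by
    rw [natDegree_sub_C, natDegree_add_eq_left_of_natDegree_lt] <;>
      simp [Fintype.one_lt_card]
  have hcode := existsOptimalLRC_of_card_points (m := m)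
    (card_add_one_dvd_card_sub_one (h ▸ even_two_mul s)) (Fintype.card_pos.trans_eq hdeg.symm)
    (hdeg.trans_lt (Nat.lt_succ_self _)) htm (by simpa [hb] using hm)
  rwa [Nat.add_sub_cancel] at hcode

end Points

/-- Let `Q` be a prime power, `s` a positive integer which is odd
(or, alternatively, `Q = 2`), and `q = Q^(2s)`. For all
`1 ≤ t < m ≤ ⌊(q + Q(Q-1)Q^s)/(Q+1)⌋`, there exists an optimal `(2, Q)`-LRC with
parameters `[m(Q+1), 2t+1, (m-t)(Q+1)]_q`. -/
theorem stmt_14 (Q : ℕ) (hQ : IsPrimePow Q)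
    (s : ℕ) (hs : 0 < s) (hcase : Odd s ∨ Q = 2)
    (q : ℕ) (hq : q = Q ^ (2 * s))
    (t m : ℕ) (ht : 1 ≤ t) (htm : t < m)
    (hm : m ≤ (q + Q * (Q - 1) * Q ^ s) / (Q + 1))
    (F : Type*) [Field F] [Fintype F] [DecidableEq F] (hF : Fintype.card F = q) :
    ExistsOptimalLRC F (m * (Q + 1)) (2 * t + 1) ((m - t) * (Q + 1)) 2 Q := by
  subst hq
  obtain ⟨K, hK, hfinrank⟩ := exists_subfield_card_eq hQ hF
  have := Fintype.ofFinite K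
  rw [Nat.card_eq_fintype_card] at hK
  subst hK
  exact existsOptimalLRC_of_finrank_eq hfinrank hcase htm (hF ▸ hm)
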